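/- The group part J of the free digroup Disgp⟨X^{±1} ∪ {e} | S⟩ (with unit the class of [e]_1) equals the set of classes of elements of Ω_e ∪ Ω_{X⁻¹}. -/

import Mathlib

/-- The alphabet X^{±1} ∪ {e}: letters x, x⁻¹ (for x ∈ X) and the symbol e. -/
inductive Letter (X : Type*) : Type _
  | pos : X → Letter X
  | neg : X → Letter X
  | e   : Letter X

/-- The free disemigroup on Y: an element [u]_m (u a nonempty word, 1 ≤ m ≤ |u|)
is encoded as the triple (prefix before the center, center letter, suffix),
so `⟨p, c, s⟩` stands for `[p·c·s]_{|p|+1}`. -/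
structure FD (Y : Type*) where
  pre : List Y
  cen : Y
  suf : List Y

namespace FD

/-- [u]_m ⊢ [v]_n = [uv]_{|u|+n}. -/
def vd {Y : Type*} (a b : FD Y) : FD Y :=
  ⟨a.pre ++ a.cen :: (a.suf ++ b.pre), b.cen, b.suf⟩

/-- [u]_m ⊣ [v]_n = [uv]_m. -/
def dv {Y : Type*} (a b : FD Y) : FD Y :=
  ⟨a.pre, a.cen, a.suf ++ b.pre ++ b.cen :: b.suf⟩

/-- The underlying associative word of [u]_m. -/
def word {Y : Type*} (a : FD Y) : List Y := a.pre ++ a.cen :: a.suf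

end FD

/-- The congruence ρ(r) on the free disemigroup generated by a set of relations r:
the smallest equivalence relation containing r compatible with ⊢ and ⊣. -/
inductive DCongr {Y : Type*} (r : FD Y → FD Y → Prop) : FD Y → FD Y → Prop
  | of {a b : FD Y} : r a b → DCongr r a b
  | refl (a : FD Y) : DCongr r a a
  | symm {a b : FD Y} : DCongr r a b → DCongr r b a
  | trans {a b c : FD Y} : DCongr r a b → DCongr r b c → DCongr r a c
  | vd {a b c d : FD Y} : DCongr r a b → DCongr r c d → DCongr r (a.vd c) (b.vd d)
  | dv {a b c d : FD Y} : DCongr r a b → DCongr r c d → DCongr r (a.dv c) (b.dv d)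

/-- The defining relations S of the free digroup:
[xx⁻¹]₂ = [e]₁, [x⁻¹x]₁ = [e]₁, [ye]₁ = [y]₁, [ey]₂ = [y]₁. -/
def rel (X : Type*) : FD (Letter X) → FD (Letter X) → Prop := fun a b =>
  (∃ x : X, a = ⟨[Letter.pos x], Letter.neg x, []⟩ ∧ b = ⟨[], Letter.e, []⟩) ∨
  (∃ x : X, a = ⟨[], Letter.neg x, [Letter.pos x]⟩ ∧ b = ⟨[], Letter.e, []⟩) ∨
  (∃ y : Letter X, a = ⟨[], y, [Letter.e]⟩ ∧ b = ⟨[], y, []⟩) ∨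
  (∃ y : Letter X, a = ⟨[Letter.e], y, []⟩ ∧ b = ⟨[], y, []⟩)

/-- The quotient disemigroup Disgp⟨X^{±1} ∪ {e} | S⟩. -/
def DQ (X : Type*) := Quot (DCongr (rel X))

/-- The class of an element of the free disemigroup in the quotient. -/
def cls {X : Type*} (a : FD (Letter X)) : DQ X := Quot.mk _ a

/-- The operation ⊢ on the quotient. -/
def DQ.vd {X : Type*} : DQ X → DQ X → DQ X :=
  Quot.map₂ FD.vd (fun a _ _ h => DCongr.vd (DCongr.refl a) h)
    (fun _ _ b h => DCongr.vd h (DCongr.refl b))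

/-- The operation ⊣ on the quotient. -/
def DQ.dv {X : Type*} : DQ X → DQ X → DQ X :=
  Quot.map₂ FD.dv (fun a _ _ h => DCongr.dv (DCongr.refl a) h)
    (fun _ _ b h => DCongr.dv h (DCongr.refl b))

/-- The class of [e]₁, the unit of the free digroup. -/
def unitE (X : Type*) : DQ X := cls ⟨[], Letter.e, []⟩

/-- Words over X^{±1} are lists of pairs (x, b), where (x, true) is x and
(x, false) is x⁻¹, as for `FreeGroup`. This converts such a pair to a `Letter`. -/
def pm {X : Type*} (p : X × Bool) : Letter X :=
  if p.2 then Letter.pos p.1 else Letter.neg p.1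

/-- A word over X^{±1} is reduced (lies in gp⟨X⟩) if it has no adjacent pair
of mutually inverse letters. -/
def Reduced {X : Type*} (L : List (X × Bool)) : Prop :=
  List.Chain' (fun a b => ¬(a.1 = b.1 ∧ a.2 = !b.2)) L

/-- Delete all occurrences of e from a word over X^{±1} ∪ {e} (the map τ). -/
def strip {X : Type*} (L : List (Letter X)) : List (X × Bool) :=
  L.flatMap fun l => match l with
    | Letter.pos x => [(x, true)]
    | Letter.neg x => [(x, false)]
    | Letter.e => []

/-- ŵ: the reduced word of w, obtained by deleting the e's and freely reducing. -/
noncomputable def hat {X : Type*} (L : List (Letter X)) : List (X × Bool) :=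
  letI := Classical.decEq X
  FreeGroup.reduce (strip L)

/-- λ(w): the (1-based) position of the first letter of w lying in X⁻¹. -/
def lam {X : Type*} (L : List (X × Bool)) : ℕ := L.findIdx (fun p => !p.2) + 1

/-- The element [L]_m of the free disemigroup determined by a word L over X^{±1}
and a center position m. -/
def toNF {X : Type*} (L : List (X × Bool)) (m : ℕ) : FD (Letter X) :=
  ⟨(L.take (m - 1)).map pm, ((L[m-1]?).map pm).getD Letter.e, (L.drop m).map pm⟩

/-- Ω_e = {[eu]₁ : u ∈ X*}. -/
def OmegaE (X : Type*) : Set (FD (Letter X)) :=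
  {a | ∃ u : List X, a = ⟨[], Letter.e, u.map Letter.pos⟩}

/-- Ω_X = {[uxv]_{|u|+1} : x ∈ X, u, v ∈ gp⟨X⟩}. -/
def OmegaX (X : Type*) : Set (FD (Letter X)) :=
  {a | ∃ (x : X) (u v : List (X × Bool)), Reduced u ∧ Reduced v ∧
    a = ⟨u.map pm, Letter.pos x, v.map pm⟩}

/-- Ω_{X⁻¹} = {[ux⁻¹v]_{|u|+1} : x ∈ X, u ∈ X*, v ∈ (X^{±1})*, ux⁻¹v reduced}. -/
def OmegaInv (X : Type*) : Set (FD (Letter X)) :=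
  {a | ∃ (x : X) (u : List X) (v : List (X × Bool)),
    Reduced ((u.map fun y => (y, true)) ++ (x, false) :: v) ∧
    a = ⟨u.map Letter.pos, Letter.neg x, v.map pm⟩}

/-- Inversion of a single letter. -/
def linv {X : Type*} : Letter X → Letter X
  | Letter.pos x => Letter.neg x
  | Letter.neg x => Letter.pos x
  | Letter.e => Letter.e

/-- The formal inverse w⁻¹ of a word over X^{±1}. -/
def invw {X : Type*} (L : List (X × Bool)) : List (X × Bool) :=
  L.reverse.map fun p => (p.1, !p.2)

/-- Whether a letter lies outside X, i.e. is `e` or lies in X⁻¹. -/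
def Letter.NotPos {X : Type*} : Letter X → Prop
  | Letter.pos _ => False
  | _ => True

namespace DCongr

/-- The congruence does not change whether the center lies in X. -/
theorem notPos_cen_iff {X : Type*} {a b : FD (Letter X)} (h : DCongr (rel X) a b) :
    a.cen.NotPos ↔ b.cen.NotPos := by
  induction h with
  | of h =>
    rcases h with ⟨x, rfl, rfl⟩ | ⟨x, rfl, rfl⟩ | ⟨y, rfl, rfl⟩ | ⟨y, rfl, rfl⟩ <;>
      simp [Letter.NotPos]
  | refl => rfl
  | symm _ ih => exact ih.symm
  | trans _ _ ih₁ ih₂ => exact ih₁.trans ih₂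
  | vd _ _ _ ih => exact ih
  | dv _ _ ih _ => exact ih

theorem append_left {Y : Type*} {r : FD Y → FD Y → Prop} {a b : FD Y} (h : DCongr r a b)
    (p : List Y) : DCongr r ⟨p ++ a.pre, a.cen, a.suf⟩ ⟨p ++ b.pre, b.cen, b.suf⟩ := by
  cases p with
  | nil => exact h
  | cons y p => exact .vd (.refl ⟨[], y, p⟩) h

theorem append_right {Y : Type*} {r : FD Y → FD Y → Prop} {a b : FD Y} (h : DCongr r a b)
    (s : List Y) : DCongr r ⟨a.pre, a.cen, a.suf ++ s⟩ ⟨b.pre, b.cen, b.suf ++ s⟩ := by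
  cases s with
  | nil => simpa using h
  | cons y s => simpa [FD.dv] using DCongr.dv h (.refl ⟨[], y, s⟩)

/-- Congruent elements have interchangeable words to the right of a center. -/
theorem suf_word {Y : Type*} {r : FD Y → FD Y → Prop} {a b : FD Y} (h : DCongr r a b)
    (c : Y) (s t : List Y) :
    DCongr r ⟨[], c, s ++ a.word ++ t⟩ ⟨[], c, s ++ b.word ++ t⟩ := by
  simpa [FD.dv, FD.word] using (DCongr.dv (.refl ⟨[], c, s⟩) h).append_right t

variable {X : Type*}

theorem pos_neg (x : X) :
    DCongr (rel X) ⟨[Letter.pos x], Letter.neg x, []⟩ ⟨[], Letter.e, []⟩ :=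
  .of (.inl ⟨x, rfl, rfl⟩)

theorem neg_pos (x : X) :
    DCongr (rel X) ⟨[], Letter.neg x, [Letter.pos x]⟩ ⟨[], Letter.e, []⟩ :=
  .of (.inr (.inl ⟨x, rfl, rfl⟩))

theorem dv_e (y : Letter X) : DCongr (rel X) ⟨[], y, [Letter.e]⟩ ⟨[], y, []⟩ :=
  .of (.inr (.inr (.inl ⟨y, rfl, rfl⟩)))

theorem e_vd (y : Letter X) : DCongr (rel X) ⟨[Letter.e], y, []⟩ ⟨[], y, []⟩ :=
  .of (.inr (.inr (.inr ⟨y, rfl, rfl⟩)))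

/-- A center outside X can be replaced by `e` followed by that letter. -/
theorem cen_to_suf {c : Letter X} (hc : c.NotPos) :
    DCongr (rel X) ⟨[], c, []⟩ ⟨[], Letter.e, [c]⟩ := by
  cases c with
  | pos x => exact hc.elim
  | e => exact (dv_e _).symm
  | neg x =>
    have h₁ : DCongr (rel X) ⟨[], Letter.neg x, [Letter.pos x, Letter.neg x]⟩
        ⟨[], Letter.e, [Letter.neg x]⟩ := (neg_pos x).append_right [Letter.neg x]
    have h₂ : DCongr (rel X) ⟨[], Letter.neg x, [Letter.pos x, Letter.neg x]⟩
        ⟨[], Letter.neg x, [Letter.e]⟩ := (pos_neg x).suf_word (Letter.neg x) [] []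
    exact (dv_e _).symm.trans (h₂.symm.trans h₁)

/-- The center `e` commutes with every letter. -/
theorem e_comm (y : Letter X) :
    DCongr (rel X) ⟨[y], Letter.e, []⟩ ⟨[], Letter.e, [y]⟩ := by
  cases y with
  | e => exact (e_vd _).trans (dv_e _).symm
  | pos x =>
    exact ((neg_pos x).append_left [Letter.pos x]).symm.trans
      ((pos_neg x).append_right [Letter.pos x])
  | neg x =>
    have h₁ : DCongr (rel X) ⟨[Letter.neg x, Letter.pos x], Letter.neg x, []⟩
        ⟨[Letter.neg x], Letter.e, []⟩ := (pos_neg x).append_left [Letter.neg x]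
    have h₂ : DCongr (rel X) ⟨[Letter.neg x, Letter.pos x], Letter.neg x, []⟩
        ⟨[Letter.e], Letter.neg x, []⟩ := .vd (neg_pos x) (.refl ⟨[], Letter.neg x, []⟩)
    exact h₁.symm.trans (h₂.trans ((e_vd _).trans (cen_to_suf trivial)))

theorem pre_to_suf (p s : List (Letter X)) :
    DCongr (rel X) ⟨p, Letter.e, s⟩ ⟨[], Letter.e, p ++ s⟩ := by
  induction p with
  | nil => exact .refl _
  | cons y p ih => exact (ih.append_left [y]).trans ((e_comm y).append_right (p ++ s))

/-- An element whose center is outside X is determined by its word, with center `e` in front. -/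
theorem to_e_word {a : FD (Letter X)} (ha : a.cen.NotPos) :
    DCongr (rel X) a ⟨[], Letter.e, a.word⟩ := by
  obtain ⟨p, c, s⟩ := a
  have h := ((cen_to_suf ha).append_right s).append_left p
  simp only [List.append_nil, List.nil_append] at h
  exact h.trans (pre_to_suf p (c :: s))

theorem remove_e (c : Letter X) (s t : List (Letter X)) :
    DCongr (rel X) ⟨[], c, s ++ Letter.e :: t⟩ ⟨[], c, s ++ t⟩ := by
  cases t with
  | nil =>
    cases s using List.reverseRecOn with
    | nil => exact dv_e c
    | append_singleton s y => simpa [FD.word] using (dv_e y).suf_word c s []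
  | cons y t => simpa [FD.word] using (e_vd y).suf_word c s t

theorem strip_suf (c : Letter X) (s w : List (Letter X)) :
    DCongr (rel X) ⟨[], c, s ++ w⟩ ⟨[], c, s ++ (strip w).map pm⟩ := by
  induction w generalizing s with
  | nil => exact .refl _
  | cons y w ih =>
    cases y with
    | e => simpa [strip] using (remove_e c s w).trans (ih s)
    | pos x => simpa [strip, pm] using ih (s ++ [Letter.pos x])
    | neg x => simpa [strip, pm] using ih (s ++ [Letter.neg x])

theorem suf_of_red_step {L₁ L₂ : List (X × Bool)} (h : FreeGroup.Red.Step L₁ L₂) (c : Letter X) :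
    DCongr (rel X) ⟨[], c, L₁.map pm⟩ ⟨[], c, L₂.map pm⟩ := by
  obtain @⟨s, t, x, b⟩ := h
  have key : DCongr (rel X) ⟨[], c, s.map pm ++ [pm (x, b), pm (x, !b)] ++ t.map pm⟩
      ⟨[], c, s.map pm ++ [Letter.e] ++ t.map pm⟩ := by
    cases b
    · exact (neg_pos x).suf_word c _ _
    · exact (pos_neg x).suf_word c _ _
  simpa using key.trans (by simpa using remove_e c (s.map pm) (t.map pm))

theorem suf_of_mk_eq {L₁ L₂ : List (X × Bool)} (h : FreeGroup.mk L₁ = FreeGroup.mk L₂)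
    (c : Letter X) : DCongr (rel X) ⟨[], c, L₁.map pm⟩ ⟨[], c, L₂.map pm⟩ := by
  have h' := Quot.eqvGen_exact h
  induction h' with
  | rel _ _ hab => exact suf_of_red_step hab c
  | refl => exact .refl _
  | symm _ _ hab ih => exact (ih (Quot.eqvGen_sound hab)).symm
  | trans _ _ _ hab hbc ih₁ ih₂ =>
    exact (ih₁ (Quot.eqvGen_sound hab)).trans (ih₂ (Quot.eqvGen_sound hbc))

theorem of_mk_strip_eq {a b : FD (Letter X)} (ha : a.cen.NotPos) (hb : b.cen.NotPos)
    (h : FreeGroup.mk (strip a.word) = FreeGroup.mk (strip b.word)) : DCongr (rel X) a b :=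
  (to_e_word ha).trans <| (strip_suf _ [] _).trans <| (suf_of_mk_eq h _).trans <|
    (strip_suf _ [] _).symm.trans (to_e_word hb).symm

end DCongr

section GroupPart

variable {X : Type*}

theorem strip_append (s t : List (Letter X)) : strip (s ++ t) = strip s ++ strip t :=
  List.flatMap_append

theorem strip_map_pm (L : List (X × Bool)) : strip (L.map pm) = L := by
  induction L with
  | nil => rfl
  | cons p L ih =>
    obtain ⟨x, b⟩ := p
    cases b <;> simpa [strip, pm] using ih

theorem strip_map_pos (u : List X) : strip (u.map Letter.pos) = u.map fun y => (y, true) := by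
  induction u with
  | nil => rfl
  | cons y u ih => simpa [strip] using ih

theorem reduced_of_isReduced {L : List (X × Bool)} (h : FreeGroup.IsReduced L) : Reduced L := by
  refine List.IsChain.imp (fun a b hab hne => ?_) h
  have := hab hne.1
  simp_all

/-- A word over X^{±1} either is positive or has a first letter in X⁻¹. -/
theorem eq_map_pos_or_exists_first_neg (L : List (X × Bool)) :
    (∃ u : List X, L = u.map fun y => (y, true)) ∨
      ∃ (u : List X) (x : X) (v : List (X × Bool)),
        L = (u.map fun y => (y, true)) ++ (x, false) :: v := by
  induction L with
  | nil => exact .inl ⟨[], rfl⟩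
  | cons p L ih =>
    obtain ⟨x, b⟩ := p
    cases b with
    | false => exact .inr ⟨[], x, L, rfl⟩
    | true =>
      rcases ih with ⟨u, rfl⟩ | ⟨u, y, v, rfl⟩
      · exact .inl ⟨x :: u, rfl⟩
      · exact .inr ⟨x :: u, y, v, rfl⟩

/-- Every element of the free group is represented by an element of Ω_e ∪ Ω_{X⁻¹}. -/
theorem exists_omega_mk_strip_eq (g : FreeGroup X) :
    ∃ a ∈ OmegaE X ∪ OmegaInv X, FreeGroup.mk (strip a.word) = g := by
  classical
  have hr : Reduced g.toWord := reduced_of_isReduced FreeGroup.isReduced_toWord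
  have hg : FreeGroup.mk g.toWord = g := FreeGroup.mk_toWord
  rcases eq_map_pos_or_exists_first_neg g.toWord with ⟨u, hu⟩ | ⟨u, x, v, hu⟩
  · refine ⟨_, .inl ⟨u, rfl⟩, ?_⟩
    rw [← hg, hu, ← strip_map_pos]
    rfl
  · refine ⟨_, .inr ⟨x, u, v, hu ▸ hr, rfl⟩, ?_⟩
    have hv : strip (Letter.neg x :: v.map pm) = (x, false) :: v := strip_map_pm ((x, false) :: v)
    rw [FD.word, strip_append, strip_map_pos, hv, ← hu, hg]

theorem notPos_cen_of_mem_omega {a : FD (Letter X)} (h : a ∈ OmegaE X ∪ OmegaInv X) :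
    a.cen.NotPos := by
  rcases h with ⟨u, rfl⟩ | ⟨x, u, v, -, rfl⟩ <;> trivial

theorem cls_eq_cls_iff {a b : FD (Letter X)} : cls a = cls b ↔ DCongr (rel X) a b :=
  Quot.eq.trans (Equivalence.eqvGen_iff ⟨.refl, .symm, .trans⟩)

/-- A class whose center lies outside X has a two-sided inverse. -/
theorem exists_inverse {b : FD (Letter X)} (hb : b.cen.NotPos) :
    ∃ a : DQ X, DQ.vd a (cls b) = unitE X ∧ DQ.dv (cls b) a = unitE X := by
  have hinv : FreeGroup.mk (strip (Letter.e :: (FreeGroup.invRev (strip b.word)).map pm)) =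
      (FreeGroup.mk (strip b.word))⁻¹ := by
    rw [FreeGroup.inv_mk]
    exact congrArg _ (strip_map_pm _)
  refine ⟨cls ⟨[], Letter.e, (FreeGroup.invRev (strip b.word)).map pm⟩,
    cls_eq_cls_iff.2 (DCongr.of_mk_strip_eq hb trivial ?_),
    cls_eq_cls_iff.2 (DCongr.of_mk_strip_eq hb trivial ?_)⟩
  · have hw : (FD.vd ⟨[], Letter.e, (FreeGroup.invRev (strip b.word)).map pm⟩ b).word =
        (Letter.e :: (FreeGroup.invRev (strip b.word)).map pm) ++ b.word := by
      simp [FD.vd, FD.word]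
    rw [hw, strip_append, ← FreeGroup.mul_mk, hinv, inv_mul_cancel]
    rfl
  · have hw : (FD.dv b ⟨[], Letter.e, (FreeGroup.invRev (strip b.word)).map pm⟩).word =
        b.word ++ (Letter.e :: (FreeGroup.invRev (strip b.word)).map pm) := by
      simp [FD.dv, FD.word]
    rw [hw, strip_append, ← FreeGroup.mul_mk, hinv, mul_inv_cancel]
    rfl

end GroupPart

/-- The group part J = {a† : a ∈ D} of the free digroup Disgp⟨X^{±1} ∪ {e} | S⟩
(i.e. the set of all two-sided inverses) equals the set of classes of elements
of Ω_e ∪ Ω_{X⁻¹}. -/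
theorem group_part_eq (X : Type*) :
    {b : DQ X | ∃ a : DQ X, DQ.vd a b = unitE X ∧ DQ.dv b a = unitE X} =
      cls '' (OmegaE X ∪ OmegaInv X) := by
  ext b
  constructor
  · rintro ⟨a, hab, -⟩
    obtain ⟨b, rfl⟩ := Quot.exists_rep b
    obtain ⟨a, rfl⟩ := Quot.exists_rep a
    have hb : b.cen.NotPos := (cls_eq_cls_iff.1 hab).notPos_cen_iff.2 trivial
    obtain ⟨c, hc, hcb⟩ := exists_omega_mk_strip_eq (FreeGroup.mk (strip b.word))
    exact ⟨c, hc, cls_eq_cls_iff.2 (DCongr.of_mk_strip_eq (notPos_cen_of_mem_omega hc) hb hcb)⟩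
  · rintro ⟨b, hb, rfl⟩
    exact exists_inverse (notPos_cen_of_mem_omega hb)
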